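/- Let L be a compact subset of ℂ, let Ω = ℂ∖L, and let p ∈ {1,2,...} ∪ {∞}. Then every f ∈ Ã^p(Ω ∪ {∞}) is constant (i.e. the capacity ã_p(L) is zero) if and only if L has empty interior in ℂ. -/

import Mathlib

/-!
If `interior L = ∅`, then `Ω` is dense, and the Whitney condition of order one says that the
extension of `f` to `closure Ω = ℂ` is complex differentiable everywhere. This entire function
still has a finite limit at infinity, hence is constant by Liouville's theorem. Conversely, if
`a ∈ interior L`, then `z ↦ (z - a)⁻¹` is analytic on a neighbourhood of `closure Ω`, so Taylor's
theorem with a remainder that is uniform on compact sets puts this nonconstant function in the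
class for every `p`.
-/

open Filter Set

/-- `f` belongs to the Whitney-type class `Ã^p(Ω ∪ {∞})` for `Ω = ℂ \ L`:
`f` is holomorphic on `Ω`, has a finite limit at infinity, for every integer `j ≤ p`
the derivative `f⁽ʲ⁾` extends continuously (as `g j`) to the closure of `Ω` in `ℂ`,
and the Whitney condition
`g j w − Σ_{k=0}^{j'−j} (1/k!) g (j+k) z (w−z)^k = o(|w−z|^{j'−j})` as `w → z` holds
uniformly for `z, w` in compact subsets of the closure of `Ω`, for all `j ≤ j' ≤ p`. -/
def MemATildeInf (p : ℕ∞) (L : Set ℂ) (f : ℂ → ℂ) : Prop :=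
  DifferentiableOn ℂ f Lᶜ ∧
  (∃ c : ℂ, Tendsto f (cocompact ℂ) (nhds c)) ∧
  ∃ g : ℕ → ℂ → ℂ,
    (∀ j : ℕ, (j : ℕ∞) ≤ p →
      ContinuousOn (g j) (closure Lᶜ) ∧ Set.EqOn (g j) (iteratedDeriv j f) Lᶜ) ∧
    (∀ j j' : ℕ, j ≤ j' → (j' : ℕ∞) ≤ p →
      ∀ K : Set ℂ, K ⊆ closure Lᶜ → IsCompact K →
        ∀ ε : ℝ, 0 < ε → ∃ δ : ℝ, 0 < δ ∧
          ∀ z ∈ K, ∀ w ∈ K, ‖w - z‖ < δ →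
            ‖g j w - ∑ k ∈ Finset.range (j' - j + 1),
                (1 / (Nat.factorial k : ℂ)) * g (j + k) z * (w - z) ^ k‖
              ≤ ε * ‖w - z‖ ^ (j' - j))

open scoped Nat Topology

section IteratedDeriv

variable {𝕜 E : Type*} [NontriviallyNormedField 𝕜] [NormedAddCommGroup E] [NormedSpace 𝕜 E]
  {f : 𝕜 → E}

lemma analyticAt_iteratedDeriv [CompleteSpace E] {x : 𝕜} (hf : AnalyticAt 𝕜 f x) (n : ℕ) :
    AnalyticAt 𝕜 (iteratedDeriv n f) x := by
  rw [iteratedDeriv_eq_iterate]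
  exact hf.iterated_deriv n

lemma iteratedDeriv_iteratedDeriv (j k : ℕ) :
    iteratedDeriv k (iteratedDeriv j f) = iteratedDeriv (j + k) f := by
  rw [iteratedDeriv_eq_iterate, iteratedDeriv_eq_iterate, iteratedDeriv_eq_iterate,
    ← Function.iterate_add_apply, add_comm]

end IteratedDeriv

section Taylor

/-- The value at the increment `h` of the Taylor polynomial with `n` terms whose derivatives at the
base point are `c 0, c 1, …`. Keeping the coefficients as a free sequence lets differentiation act
as the shift of `c`. -/
noncomputable def taylorPoly {𝕜 E : Type*} [Field 𝕜] [AddCommMonoid E] [Module 𝕜 E] (c : ℕ → E)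
    (n : ℕ) (h : 𝕜) : E :=
  ∑ k ∈ Finset.range n, ((k ! : 𝕜)⁻¹ * h ^ k) • c k

lemma taylorPoly_succ_zero {𝕜 E : Type*} [Field 𝕜] [AddCommMonoid E] [Module 𝕜 E] (c : ℕ → E)
    (n : ℕ) : taylorPoly c (n + 1) (0 : 𝕜) = c 0 := by
  simp [taylorPoly, Finset.sum_range_succ']

lemma hasDerivAt_taylorPoly {𝕜 E : Type*} [NontriviallyNormedField 𝕜] [CharZero 𝕜]
    [NormedAddCommGroup E] [NormedSpace 𝕜 E] (c : ℕ → E) (n : ℕ) (h : 𝕜) :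
    HasDerivAt (taylorPoly c (n + 1)) (taylorPoly (fun k ↦ c (k + 1)) n h) h := by
  have hterm (k : ℕ) : HasDerivAt (fun x : 𝕜 ↦ (((k + 1)! : 𝕜)⁻¹ * x ^ (k + 1)) • c (k + 1))
      (((k ! : 𝕜)⁻¹ * h ^ k) • c (k + 1)) h := by
    have hcoeff : ((k + 1)! : 𝕜)⁻¹ * (↑(k + 1) * h ^ k) = (k ! : 𝕜)⁻¹ * h ^ k := by
      have : (k : 𝕜) + 1 ≠ 0 := k.cast_add_one_ne_zero
      rw [Nat.factorial_succ]
      push_cast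
      field_simp
    simpa only [Nat.add_sub_cancel, hcoeff] using
      ((hasDerivAt_pow (k + 1) h).const_mul ((k + 1)! : 𝕜)⁻¹).smul_const (c (k + 1))
  have hpoly : taylorPoly c (n + 1) = fun x : 𝕜 ↦
      ∑ k ∈ Finset.range n, (((k + 1)! : 𝕜)⁻¹ * x ^ (k + 1)) • c (k + 1) + c 0 := by
    funext x
    simp [taylorPoly, Finset.sum_range_succ']
  rw [hpoly]
  exact (HasDerivAt.fun_sum fun k _ ↦ hterm k).add_const (c 0)

variable {𝕜 E : Type*} [RCLike 𝕜] [NormedAddCommGroup E] [NormedSpace 𝕜 E]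

theorem norm_sub_taylorPoly_le_of_convex {s : Set 𝕜} (hs : Convex ℝ s) {n : ℕ} {C : ℝ}
    {g : ℕ → 𝕜 → E} (hg : ∀ k < n, ∀ x ∈ s, HasDerivWithinAt (g k) (g (k + 1) x) s x)
    (hC : ∀ x ∈ s, ‖g n x‖ ≤ C) {z w : 𝕜} (hz : z ∈ s) (hw : w ∈ s) :
    ‖g 0 w - taylorPoly (fun k ↦ g k z) n (w - z)‖ ≤ C * ‖w - z‖ ^ n := by
  induction n generalizing g w with
  | zero => simpa [taylorPoly] using hC w hw
  | succ n ih =>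
    have hseg : segment ℝ z w ⊆ s := hs.segment_subset hz hw
    have hC0 : 0 ≤ C := (norm_nonneg _).trans (hC z hz)
    have hderiv : ∀ x ∈ segment ℝ z w,
        HasDerivWithinAt (fun y ↦ g 0 y - taylorPoly (fun k ↦ g k z) (n + 1) (y - z))
          (g 1 x - taylorPoly (fun k ↦ g (k + 1) z) n (x - z)) (segment ℝ z w) x := fun x hx ↦
      ((hg 0 n.succ_pos x (hseg hx)).mono hseg).sub
        ((hasDerivAt_taylorPoly _ n (x - z)).comp_sub_const x z).hasDerivWithinAt
    have hbound : ∀ x ∈ segment ℝ z w,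
        ‖g 1 x - taylorPoly (fun k ↦ g (k + 1) z) n (x - z)‖ ≤ C * ‖w - z‖ ^ n := fun x hx ↦
      calc ‖g 1 x - taylorPoly (fun k ↦ g (k + 1) z) n (x - z)‖ ≤ C * ‖x - z‖ ^ n :=
            ih (g := fun k ↦ g (k + 1)) (fun k hk ↦ hg (k + 1) (Nat.succ_lt_succ hk)) hC (hseg hx)
        _ ≤ C * ‖w - z‖ ^ n := by
            gcongr
            exact norm_sub_le_of_mem_segment hx
    simpa only [sub_self, taylorPoly_succ_zero, sub_zero, pow_succ, mul_assoc] using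
      (convex_segment z w).norm_image_sub_le_of_norm_hasDerivWithin_le hderiv hbound
        (left_mem_segment ℝ z w) (right_mem_segment ℝ z w)

variable [CompleteSpace E] {f : 𝕜 → E}

theorem exists_norm_sub_taylorPoly_le_mul_pow {K : Set 𝕜} (hK : IsCompact K)
    (hf : AnalyticOnNhd 𝕜 f K) (n : ℕ) :
    ∃ r > 0, ∃ C, ∀ z ∈ K, ∀ w, ‖w - z‖ < r →
      ‖f w - taylorPoly (fun k ↦ iteratedDeriv k f z) n (w - z)‖ ≤ C * ‖w - z‖ ^ n := by
  obtain ⟨r, hr, hKr⟩ := hK.exists_cthickening_subset_open (isOpen_analyticAt 𝕜 f) hf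
  have hcont : ContinuousOn (iteratedDeriv n f) (Metric.cthickening r K) := fun x hx ↦
    (analyticAt_iteratedDeriv (hKr hx) n).continuousAt.continuousWithinAt
  obtain ⟨C, hC⟩ := hK.cthickening.exists_bound_of_continuousOn hcont
  refine ⟨r, hr, C, fun z hz w hw ↦ ?_⟩
  have hball : Metric.ball z r ⊆ Metric.cthickening r K :=
    (Metric.ball_subset_thickening hz r).trans (Metric.thickening_subset_cthickening r K)
  have hderiv (k : ℕ) (x : 𝕜) (hx : x ∈ Metric.ball z r) :
      HasDerivWithinAt (iteratedDeriv k f) (iteratedDeriv (k + 1) f x) (Metric.ball z r) x := by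
    rw [iteratedDeriv_succ]
    exact HasDerivAt.hasDerivWithinAt
      (analyticAt_iteratedDeriv (hKr (hball hx)) k).differentiableAt.hasDerivAt
  simpa only [iteratedDeriv_zero] using
    norm_sub_taylorPoly_le_of_convex (convex_ball z r) (fun k _ ↦ hderiv k)
      (fun x hx ↦ hC x (hball hx)) (Metric.mem_ball_self hr) (mem_ball_iff_norm.mpr hw)

theorem exists_norm_sub_taylorPoly_succ_le {K : Set 𝕜} (hK : IsCompact K)
    (hf : AnalyticOnNhd 𝕜 f K) (n : ℕ) {ε : ℝ} (hε : 0 < ε) :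
    ∃ δ > 0, ∀ z ∈ K, ∀ w, ‖w - z‖ < δ →
      ‖f w - taylorPoly (fun k ↦ iteratedDeriv k f z) (n + 1) (w - z)‖ ≤ ε * ‖w - z‖ ^ n := by
  obtain ⟨r, hr, C, hC⟩ := exists_norm_sub_taylorPoly_le_mul_pow hK hf (n + 1)
  obtain ⟨η, hη, hCη⟩ := exists_pos_mul_lt hε |C|
  refine ⟨min r η, lt_min hr hη, fun z hz w hw ↦ ?_⟩
  have hwη : ‖w - z‖ ≤ η := hw.le.trans (min_le_right r η)
  calc ‖f w - taylorPoly (fun k ↦ iteratedDeriv k f z) (n + 1) (w - z)‖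
      ≤ C * ‖w - z‖ ^ (n + 1) := hC z hz w (hw.trans_le (min_le_left r η))
    _ = C * ‖w - z‖ * ‖w - z‖ ^ n := by ring
    _ ≤ |C| * η * ‖w - z‖ ^ n := by
        gcongr
        exact le_abs_self C
    _ ≤ ε * ‖w - z‖ ^ n := by gcongr

end Taylor

section Cocompact

variable {X : Type*} [TopologicalSpace X]

lemma nontrivial_compl_of_isCompact [NoncompactSpace X] {K : Set X} (hK : IsCompact K) :
    Kᶜ.Nontrivial := by
  rw [← not_subsingleton_iff]
  intro hsub
  refine noncompact_univ X ?_
  rw [← union_compl_self K]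
  exact hK.union hsub.isCompact

theorem tendsto_cocompact_of_dense [R1Space X] {Y : Type*} [TopologicalSpace Y] [RegularSpace Y]
    {F : X → Y} (hF : Continuous F) {s : Set X} (hs : Dense s) {y : Y}
    (h : Tendsto F (cocompact X ⊓ 𝓟 s) (𝓝 y)) :
    Tendsto F (cocompact X) (𝓝 y) := by
  rw [← coclosedCompact_eq_cocompact] at h ⊢
  refine (closed_nhds_basis y).tendsto_right_iff.mpr fun V ⟨hV, hVclosed⟩ ↦ ?_
  obtain ⟨K, ⟨hKclosed, hK⟩, hKV⟩ := (hasBasis_coclosedCompact.inf_principal s).mem_iff.mp (h hV)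
  filter_upwards [hasBasis_coclosedCompact.mem_of_mem ⟨hKclosed, hK⟩] with x hx
  exact closure_minimal hKV (hVclosed.preimage hF)
    (hs.open_subset_closure_inter hKclosed.isOpen_compl hx)

end Cocompact

section ATilde

variable {p : ℕ∞} {L : Set ℂ} {f : ℂ → ℂ}

theorem memATildeInf_of_analyticOnNhd (hf : AnalyticOnNhd ℂ f (closure Lᶜ)) {c : ℂ}
    (hc : Tendsto f (cocompact ℂ) (𝓝 c)) : MemATildeInf p L f := by
  refine ⟨hf.differentiableOn.mono subset_closure, ⟨c, hc⟩, fun j ↦ iteratedDeriv j f,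
    fun j _ ↦ ⟨fun z hz ↦ ?_, fun _ _ ↦ rfl⟩, fun j j' _ _ K hKL hK ε hε ↦ ?_⟩
  · exact (analyticAt_iteratedDeriv (hf z hz) j).continuousAt.continuousWithinAt
  · have hfj : AnalyticOnNhd ℂ (iteratedDeriv j f) K := fun z hz ↦
      analyticAt_iteratedDeriv (hf z (hKL hz)) j
    obtain ⟨δ, hδ, hδε⟩ := exists_norm_sub_taylorPoly_succ_le hK hfj (j' - j) hε
    refine ⟨δ, hδ, fun z hz w _ hwz ↦ ?_⟩
    simpa only [taylorPoly, iteratedDeriv_iteratedDeriv, smul_eq_mul, one_div, mul_right_comm]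
      using hδε z hz w hwz

theorem memATildeInf_inv_sub {a : ℂ} (ha : a ∈ interior L) :
    MemATildeInf p L fun z ↦ (z - a)⁻¹ := by
  have hne : ∀ z ∈ closure Lᶜ, z - a ≠ 0 := by
    rintro z hz h
    rw [closure_compl, sub_eq_zero.mp h] at hz
    exact hz ha
  have hlim : Tendsto (fun z : ℂ ↦ (z - a)⁻¹) (cocompact ℂ) (𝓝 0) := by
    rw [← Metric.cobounded_eq_cocompact]
    exact tendsto_inv₀_cobounded.comp (tendsto_sub_const_cobounded a)
  exact memATildeInf_of_analyticOnNhd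
    (fun z hz ↦ (analyticAt_id.sub analyticAt_const).inv (hne z hz)) hlim

theorem MemATildeInf.exists_differentiable_extension (hp : 1 ≤ p) (hL : Dense Lᶜ)
    (hf : MemATildeInf p L f) : ∃ F : ℂ → ℂ, Differentiable ℂ F ∧ EqOn F f Lᶜ := by
  obtain ⟨-, -, g, hg, hwhitney⟩ := hf
  refine ⟨g 0, fun z ↦ ?_, by simpa only [iteratedDeriv_zero] using (hg 0 zero_le).2⟩
  have hderiv : HasDerivAt (g 0) (g 1 z) z := by
    rw [hasDerivAt_iff_isLittleO, Asymptotics.isLittleO_iff]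
    intro ε hε
    obtain ⟨δ, hδ, hδε⟩ := hwhitney 0 1 zero_le_one (by exact_mod_cast hp)
      (Metric.closedBall z 1) (by simp [hL.closure_eq]) (isCompact_closedBall z 1) ε hε
    filter_upwards [Metric.ball_mem_nhds z hδ, Metric.closedBall_mem_nhds z one_pos]
      with w hwδ hw
    simpa [Finset.sum_range_succ, sub_sub, mul_comm] using
      hδε z (Metric.mem_closedBall_self zero_le_one) w hw (mem_ball_iff_norm.mp hwδ)
  exact hderiv.differentiableAt

theorem MemATildeInf.exists_eqOn_const (hp : 1 ≤ p) (hL : Dense Lᶜ) (hf : MemATildeInf p L f) :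
    ∃ c : ℂ, ∀ z ∈ Lᶜ, f z = c := by
  obtain ⟨F, hF, hFf⟩ := hf.exists_differentiable_extension hp hL
  obtain ⟨-, ⟨c, hc⟩, -⟩ := hf
  have hFc : Tendsto F (cocompact ℂ) (𝓝 c) :=
    tendsto_cocompact_of_dense hF.continuous hL <|
      (hc.mono_left inf_le_left).congr' (hFf.symm.eventuallyEq.filter_mono inf_le_right)
  refine ⟨c, fun z hz ↦ ?_⟩
  rw [← hFf hz]
  exact hF.apply_eq_of_tendsto_cocompact z hFc

end ATilde

theorem aTildeCapacity_zero_iff_empty_interior_general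
    (p : ℕ∞) (hp : 1 ≤ p) (L : Set ℂ) (hL : Lᶜ.Nontrivial) :
    (∀ f : ℂ → ℂ, MemATildeInf p L f → ∃ c : ℂ, ∀ z ∈ Lᶜ, f z = c) ↔
    interior L = ∅ := by
  refine ⟨fun hconst ↦ eq_empty_of_forall_notMem fun a ha ↦ ?_, fun hint f hf ↦
    hf.exists_eqOn_const hp (interior_eq_empty_iff_dense_compl.mp hint)⟩
  obtain ⟨c, hc⟩ := hconst _ (memATildeInf_inv_sub ha)
  obtain ⟨z, hz, w, hw, hzw⟩ := hL
  exact hzw (sub_left_injective (inv_injective ((hc z hz).trans (hc w hw).symm)))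

/-- Let `L ⊆ ℂ` be compact, `Ω = ℂ \ L`, and `p ∈ {1,2,...} ∪ {∞}`. Then every
`f ∈ Ã^p(Ω ∪ {∞})` is constant (i.e. `ã_p(L) = 0`) iff `L` has empty interior. -/
theorem aTildeCapacity_zero_iff_empty_interior
    (p : ℕ∞) (hp : 1 ≤ p) (L : Set ℂ) (hL : IsCompact L) :
    (∀ f : ℂ → ℂ, MemATildeInf p L f → ∃ c : ℂ, ∀ z ∈ Lᶜ, f z = c) ↔
    interior L = ∅ := by
  exact aTildeCapacity_zero_iff_empty_interior_general p hp L (nontrivial_compl_of_isCompact hL)
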